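/- Let g : ℝ^n → ℝ be smooth and nowhere vanishing, and for indices i ≠ j set a^g_i = a_i + g^{-1}·∂_i g, a^g_j = a_j + g^{-1}·∂_j g, and a^g_{ij} = a_{ij} + (g^{-1}∂_j g)·a_i + (g^{-1}∂_i g)·a_j + g^{-1}·∂_i∂_j g. Then 2a^g_{ij} − 2a^g_i a^g_j − ∂_i a^g_j − ∂_j a^g_i = 2a_{ij} − 2a_i a_j − ∂_i a_j − ∂_j a_i; that is, the quantity (i,j) = 2a_{ij} − 2a_ia_j − ∂_ia_j − ∂_ja_i is invariant under the gauge transformation induced by conjugation by g. -/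

import Mathlib

/-!
Write `L_k = g⁻¹ ∂_k g` for the logarithmic derivative of `g`. The quotient rule gives
`∂_k L_l = g⁻¹ ∂_k ∂_l g - L_k L_l` (`pd_gauge`). By symmetry of second derivatives (`pd_comm`),
the derivative terms `∂_i L_j + ∂_j L_i` therefore contribute `2 g⁻¹ ∂_i ∂_j g - 2 L_i L_j`,
which is exactly what `2 a^g_{ij} - 2 a^g_i a^g_j` gains over `2 a_{ij} - 2 a_i a_j`.
-/

/-- The `i`-th partial derivative of a function on `ℝⁿ`. -/
noncomputable def pd {n : ℕ} (i : Fin n) (f : (Fin n → ℝ) → ℝ) : (Fin n → ℝ) → ℝ :=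
  fun x => fderiv ℝ f x (Pi.single i 1)

theorem contDiff_pd {n : ℕ} {f : (Fin n → ℝ) → ℝ} (hf : ContDiff ℝ (⊤ : ℕ∞) f) (k : Fin n) :
    ContDiff ℝ (⊤ : ℕ∞) (pd k f) :=
  (hf.fderiv_right (m := (⊤ : ℕ∞)) (by norm_cast)).clm_apply contDiff_const

theorem pd_comm {n : ℕ} {f : (Fin n → ℝ) → ℝ} (hf : ContDiff ℝ (⊤ : ℕ∞) f) (k l : Fin n)
    (x : Fin n → ℝ) : pd k (pd l f) x = pd l (pd k f) x := by
  have hd : DifferentiableAt ℝ (fderiv ℝ f) x :=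
    (hf.fderiv_right (m := 1) (by norm_cast)).differentiable (by norm_num) x
  have hpd (p q : Fin n) :
      pd p (pd q f) x = fderiv ℝ (fderiv ℝ f) x (Pi.single p 1) (Pi.single q 1) := by
    change fderiv ℝ (fun y => fderiv ℝ f y (Pi.single q 1)) x (Pi.single p 1) = _
    rw [fderiv_clm_apply hd (differentiableAt_const _)]
    simp
  have hsymm : IsSymmSndFDerivAt ℝ f x :=
    hf.contDiffAt.isSymmSndFDerivAt (by
      rw [minSmoothness_of_isRCLikeNormedField]
      exact WithTop.coe_le_coe.2 (le_top : (2 : ℕ∞) ≤ ⊤))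
  rw [hpd, hpd, hsymm.eq]

/-- The quotient rule for a gauge-transformed first-order coefficient. -/
theorem pd_gauge {n : ℕ} {b g : (Fin n → ℝ) → ℝ} (hb : ContDiff ℝ (⊤ : ℕ∞) b)
    (hg : ContDiff ℝ (⊤ : ℕ∞) g) (hg0 : ∀ x, g x ≠ 0) (k l : Fin n) (x : Fin n → ℝ) :
    pd k (fun y => b y + (g y)⁻¹ * pd l g y) x =
      pd k b x + (g x)⁻¹ * pd k (pd l g) x - ((g x)⁻¹ * pd k g x) * ((g x)⁻¹ * pd l g x) := by
  have hb' := (hb.differentiable (by simp) x).hasFDerivAt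
  have hg' := (hg.differentiable (by simp) x).hasFDerivAt
  have hl' := ((contDiff_pd hg l).differentiable (by simp) x).hasFDerivAt
  have h := hb'.add (((hasDerivAt_inv (hg0 x)).comp_hasFDerivAt x hg').mul hl')
  have hf : fderiv ℝ (fun y => b y + (g y)⁻¹ * pd l g y) x = _ := h.fderiv
  change fderiv ℝ (fun y => b y + (g y)⁻¹ * pd l g y) x (Pi.single k 1) = _
  rw [hf]
  simp only [pd, add_apply, smul_apply, smul_eq_mul, Function.comp_apply]
  ring

/-- the quantity `(i,j) = 2a_{ij} − 2a_ia_j − ∂_ia_j − ∂_ja_i` is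
invariant under the gauge transformation induced by conjugation by `g`:
`a^g_i = a_i + g⁻¹∂_i g`, `a^g_j = a_j + g⁻¹∂_j g`,
`a^g_{ij} = a_{ij} + (g⁻¹∂_j g)·a_i + (g⁻¹∂_i g)·a_j + g⁻¹·∂_i∂_j g`. -/
theorem round_bracket_invariant (n : ℕ) (hn : 1 ≤ n)
    (a : Fin n → (Fin n → ℝ) → ℝ) (ha : ∀ i, ContDiff ℝ (⊤ : ℕ∞) (a i))
    (a2 : Fin n → Fin n → (Fin n → ℝ) → ℝ)
    (ha2 : ∀ i j, i ≠ j → ContDiff ℝ (⊤ : ℕ∞) (a2 i j))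
    (g : (Fin n → ℝ) → ℝ) (hg : ContDiff ℝ (⊤ : ℕ∞) g) (hg0 : ∀ x, g x ≠ 0)
    (i j : Fin n) (hij : i ≠ j) (x : Fin n → ℝ)
    (agi agj agij : (Fin n → ℝ) → ℝ)
    (hagi : agi = fun y => a i y + (g y)⁻¹ * pd i g y)
    (hagj : agj = fun y => a j y + (g y)⁻¹ * pd j g y)
    (hagij : agij = fun y => a2 i j y + ((g y)⁻¹ * pd j g y) * a i y
        + ((g y)⁻¹ * pd i g y) * a j y + (g y)⁻¹ * pd i (pd j g) y) :
    2 * agij x - 2 * agi x * agj x - pd i agj x - pd j agi x =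
      2 * a2 i j x - 2 * a i x * a j x - pd i (a j) x - pd j (a i) x := by
  subst hagi hagj hagij
  rw [pd_gauge (ha j) hg hg0 i j x, pd_gauge (ha i) hg hg0 j i x, pd_comm hg j i x]
  ring
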